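/- Entropy flux compatibility: assume the thermodynamic relations e_ρ = (p − θ·p_θ)/ρ², η_ρ = −p_θ/ρ² and η_θ = e_θ/θ. Let Z := (−η + (e − u²/2 + p/ρ)/θ, u/θ, −1/θ) ∈ ℝ³. Then the row vector Zᵀ · Df¹ equals (−u·η − ρ·u·η_ρ, −ρ·η, −ρ·u·η_θ), i.e., the gradient with respect to U = (ρ,u,θ) of the entropy flux Θ = −ρ·u·η. (This is the flux condition D_UΘ = D_V𝓔·D_Uf¹ making (𝓔,Θ) = (−ρη, −ρuη) a convex entropy/entropy-flux pair for the Navier–Stokes–Fourier system.) -/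

import Mathlib

open Matrix

/-- Entropy flux compatibility for the Navier–Stokes–Fourier system: under the
thermodynamic relations `e_ρ = (p − θp_θ)/ρ²`, `η_ρ = −p_θ/ρ²`, `η_θ = e_θ/θ`, the row
vector `Zᵀ·Df¹` equals the gradient of the entropy flux `Θ = −ρuη` with respect to
`U = (ρ,u,θ)`, i.e., `D_UΘ = D_V𝓔·D_Uf¹`. -/
theorem nsf_entropy_flux_compatibility (ρ θ u p e η pρ pθ eρ eθ ηρ ηθ : ℝ)
    (hρ : 0 < ρ) (hθ : 0 < θ) (heθ : 0 < eθ)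
    (heρ : eρ = (p - θ * pθ) / ρ ^ 2)
    (hηρ : ηρ = -pθ / ρ ^ 2)
    (hηθ : ηθ = eθ / θ) :
    let Df1 : Matrix (Fin 3) (Fin 3) ℝ :=
      !![u, ρ, 0;
         u ^ 2 + pρ, 2 * ρ * u, pθ;
         u * (e + u ^ 2 / 2) + ρ * u * eρ + u * pρ, ρ * (e + u ^ 2 / 2) + ρ * u ^ 2 + p,
           ρ * u * eθ + u * pθ]
    let Z : Fin 3 → ℝ := ![-η + (e - u ^ 2 / 2 + p / ρ) / θ, u / θ, -1 / θ]
    Z ᵥ* Df1 = ![-u * η - ρ * u * ηρ, -ρ * η, -ρ * u * ηθ] := by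
  intro Df1 Z
  have h1 : ρ ≠ 0 := hρ.ne'
  have h2 : θ ≠ 0 := hθ.ne'
  subst heρ hηρ hηθ
  ext i
  fin_cases i <;>
    simp [Df1, Z, Matrix.vecMul, dotProduct, Fin.sum_univ_three] <;>
    field_simp <;> ring
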